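/- arXiv:1711.02935 — 6 statements merged into one kernel-verified Lean document; each statement's English description precedes it below -/
import Mathlib

section
/- Assume (E3) with λ ≤ 0 and (−λ)·τ* ≤ 1/2. Fix τ ∈ (0, τ*) and u, v ∈ X, write ψ(w) := Ψ(τ,u,v;w), and assume ψ̲ := inf_{w ∈ D(E)} ψ(w) is finite. Then for all w₁, w₂ ∈ D(E): d(w₁,w₂)² ≤ (8τ/(3 + 2τλ))·(ψ(w₁) + ψ(w₂) − 2·ψ̲). -/
/-- The BDF2 penalization `Ψ(τ,u,v;w) = (1/τ)·d(v,w)² − (1/(4τ))·d(u,w)² + E(w)`. -/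
noncomputable def bdf2Psi {X : Type*} [MetricSpace X] (E : X → EReal) (τ : ℝ) (u v w : X) :
    EReal :=
  ((1 / τ * dist v w ^ 2 - 1 / (4 * τ) * dist u w ^ 2 : ℝ) : EReal) + E w

/-! The penalization is convex along curves with the positive modulus `κ = 3/(2τ) + λ`. Its value at
the midpoint of such a curve is at least the infimum, so the convexity gain `κ/8 · d(w₁, w₂)²` is at
most the average of `ψ(w₁)` and `ψ(w₂)` minus the infimum. -/

section Midconvexity

variable {X : Type*} [PseudoMetricSpace X] {κ : ℝ} {ψ : X → EReal}

/-- Convexity of `ψ` with modulus `κ` along curves: any two points of the domain `{w | ψ w ≠ ⊤}` are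
joined by a curve along which `ψ` is `κ`-convex. Assumption (E3) says this of each `Ψ(τ,u,v;·)`,
with `κ = 3/(2τ) + λ`. Curves are functions on `ℝ` of which only the restriction to `[0, 1]`
matters. -/
def ConvexAlongCurves (κ : ℝ) (ψ : X → EReal) : Prop :=
  ∀ x y : X, ψ x ≠ ⊤ → ψ y ≠ ⊤ →
    ∃ γ : ℝ → X, ContinuousOn γ (Set.Icc 0 1) ∧ γ 0 = x ∧ γ 1 = y ∧
      ∀ s ∈ Set.Icc (0 : ℝ) 1,
        ψ (γ s) ≤ ((1 - s : ℝ) : EReal) * ψ x + ((s : ℝ) : EReal) * ψ y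
          - ((1 / 2 * κ * s * (1 - s) * dist x y ^ 2 : ℝ) : EReal)

/-- Midpoint convexity of `ψ` with modulus `κ`, the trace at time `1/2` of convexity along curves.
The point `z` need not be a metric midpoint of `x` and `y`. -/
def MidpointStrongConvex (κ : ℝ) (ψ : X → EReal) : Prop :=
  ∀ x y : X, ψ x ≠ ⊤ → ψ y ≠ ⊤ →
    ∃ z : X, ψ z ≤ ((1 / 2 : ℝ) : EReal) * ψ x + ((1 / 2 : ℝ) : EReal) * ψ y
      - ((κ / 8 * dist x y ^ 2 : ℝ) : EReal)

theorem ConvexAlongCurves.midpointStrongConvex (h : ConvexAlongCurves κ ψ) :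
    MidpointStrongConvex κ ψ := by
  intro x y hx hy
  obtain ⟨γ, -, -, -, hγ⟩ := h x y hx hy
  have hhalf : (1 - 1 / 2 : ℝ) = 1 / 2 := by norm_num
  have hgain : 1 / 2 * κ * (1 / 2) * (1 / 2) * dist x y ^ 2 = κ / 8 * dist x y ^ 2 := by ring
  refine ⟨γ (1 / 2), ?_⟩
  simpa only [hhalf, hgain] using hγ (1 / 2) (by norm_num)

theorem MidpointStrongConvex.sq_dist_le (h : MidpointStrongConvex κ ψ) (hκ : 0 < κ)
    {m : EReal} (hm_bot : m ≠ ⊥) (hm : ∀ w, m ≤ ψ w) {x y : X} (hx : ψ x ≠ ⊤) (hy : ψ y ≠ ⊤) :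
    ((dist x y ^ 2 : ℝ) : EReal)
      ≤ ((4 / κ : ℝ) : EReal) * (ψ x + ψ y - ((2 : ℝ) : EReal) * m) := by
  obtain ⟨z, hz⟩ := h x y hx hy
  have hmid := (hm z).trans hz
  lift m to ℝ using ⟨ne_top_of_le_ne_top hx (hm x), hm_bot⟩
  lift ψ x to ℝ using ⟨hx, ne_bot_of_le_ne_bot hm_bot (hm x)⟩ with a
  lift ψ y to ℝ using ⟨hy, ne_bot_of_le_ne_bot hm_bot (hm y)⟩ with b
  norm_cast at hmid ⊢
  rw [div_mul_eq_mul_div, le_div_iff₀ hκ]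
  linarith

end Midconvexity

section Penalization

variable {X : Type*} [MetricSpace X] {E : X → EReal} {τ : ℝ} {u v : X}

theorem bdf2Psi_ne_top_iff {w : X} : bdf2Psi E τ u v w ≠ ⊤ ↔ E w ≠ ⊤ :=
  EReal.add_ne_top_iff_ne_top_right (EReal.coe_ne_bot _) (EReal.coe_ne_top _)

theorem iInf_bdf2Psi_le (E : X → EReal) (τ : ℝ) (u v w : X) :
    (⨅ w : {w : X // E w ≠ ⊤}, bdf2Psi E τ u v w.1) ≤ bdf2Psi E τ u v w := by
  by_cases hw : bdf2Psi E τ u v w = ⊤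
  · exact le_top.trans_eq hw.symm
  · exact iInf_le (fun w : {w : X // E w ≠ ⊤} ↦ bdf2Psi E τ u v w.1) ⟨w, bdf2Psi_ne_top_iff.mp hw⟩

theorem bdf2_modulus_pos {τs lam : ℝ} (hτ : τ ∈ Set.Ioo 0 τs) (hlam : -lam * τs ≤ 1 / 2) :
    0 < 3 / (2 * τ) + lam := by
  obtain ⟨hτ₀, hττs⟩ := hτ
  have hlt : -lam < 3 / (2 * τ) := calc
    -lam ≤ 1 / 2 / τs := (le_div_iff₀ (hτ₀.trans hττs)).mpr hlam
    _ < 1 / 2 / τ := by gcongr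
    _ < 3 / (2 * τ) := by rw [div_div]; gcongr; norm_num
  linarith

theorem bdf2Psi_cauchy_estimate_general {lam : ℝ} (hτ : 0 < τ) (hκ : 0 < 3 / (2 * τ) + lam)
    (hconv : MidpointStrongConvex (3 / (2 * τ) + lam) (bdf2Psi E τ u v))
    (hinf : (⨅ w : {w : X // E w ≠ ⊤}, bdf2Psi E τ u v w.1) ≠ ⊥)
    {w₁ w₂ : X} (hw₁ : E w₁ ≠ ⊤) (hw₂ : E w₂ ≠ ⊤) :
    ((dist w₁ w₂ ^ 2 : ℝ) : EReal)
      ≤ ((8 * τ / (3 + 2 * τ * lam) : ℝ) : EReal)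
          * (bdf2Psi E τ u v w₁ + bdf2Psi E τ u v w₂
            - ((2 : ℝ) : EReal) * ⨅ w : {w : X // E w ≠ ⊤}, bdf2Psi E τ u v w.1) := by
  have hconst : 8 * τ / (3 + 2 * τ * lam) = 4 / (3 / (2 * τ) + lam) := by
    field_simp
    ring
  rw [hconst]
  exact hconv.sq_dist_le hκ hinf (iInf_bdf2Psi_le E τ u v)
    (bdf2Psi_ne_top_iff.mpr hw₁) (bdf2Psi_ne_top_iff.mpr hw₂)

end Penalization

/-- Under assumption (E3), if `ψ̲ := inf_{D(E)} Ψ(τ,u,v;·)` is finite, then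
any two points of the domain satisfy the quantitative estimate
`d(w₁,w₂)² ≤ (8τ/(3+2τλ))·(ψ(w₁)+ψ(w₂)−2ψ̲)`. -/
theorem bdf2Psi_cauchy_estimate {X : Type*} [MetricSpace X] [CompleteSpace X]
    [TopologicalSpace.SeparableSpace X]
    (E : X → EReal) (hbot : ∀ w, E w ≠ ⊥)
    (τs lam : ℝ) (hτs : 0 < τs) (hlam : lam ≤ 0) (hlamτs : (-lam) * τs ≤ 1 / 2)
    (hE3 : ∀ τ ∈ Set.Ioo (0 : ℝ) τs, ∀ u v γ₀ γ₁ : X, E γ₀ ≠ ⊤ → E γ₁ ≠ ⊤ →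
      ∃ γ : ℝ → X, ContinuousOn γ (Set.Icc 0 1) ∧ γ 0 = γ₀ ∧ γ 1 = γ₁ ∧
        ∀ s ∈ Set.Icc (0 : ℝ) 1,
          bdf2Psi E τ u v (γ s)
            ≤ ((1 - s : ℝ) : EReal) * bdf2Psi E τ u v γ₀
              + ((s : ℝ) : EReal) * bdf2Psi E τ u v γ₁
              - ((1 / 2 * (3 / (2 * τ) + lam) * s * (1 - s) * dist γ₀ γ₁ ^ 2 : ℝ) : EReal))
    (τ : ℝ) (hτ : τ ∈ Set.Ioo 0 τs) (u v : X)
    (psibar : EReal)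
    (hpsibar : psibar = ⨅ w : {w : X // E w ≠ ⊤}, bdf2Psi E τ u v w.1)
    (hfin₁ : psibar ≠ ⊥) (hfin₂ : psibar ≠ ⊤)
    (w₁ w₂ : X) (hw₁ : E w₁ ≠ ⊤) (hw₂ : E w₂ ≠ ⊤) :
    ((dist w₁ w₂ ^ 2 : ℝ) : EReal)
      ≤ ((8 * τ / (3 + 2 * τ * lam) : ℝ) : EReal)
          * (bdf2Psi E τ u v w₁ + bdf2Psi E τ u v w₂ - ((2 : ℝ) : EReal) * psibar) := by
  subst hpsibar
  exact bdf2Psi_cauchy_estimate_general hτ.1 (bdf2_modulus_pos hτ hlamτs)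
    (ConvexAlongCurves.midpointStrongConvex fun x y hx hy ↦
      hE3 τ hτ u v x y (bdf2Psi_ne_top_iff.mp hx) (bdf2Psi_ne_top_iff.mp hy)) hfin₁ hw₁ hw₂
end

section
/- Let τ > 0, let u, v ∈ D(E), and let w* ∈ X be a minimizer of w ↦ Ψ(τ,u,v;w) over X. Then the one-step almost-energy-diminishing estimate holds: E(w*) + (1/(2τ))·d(v,w*)² ≤ E(v) + (1/(4τ))·d(u,v)². -/
/-!
Compare the values of `Ψ(τ,u,v;·)` at `w*` and at `v`. The triangle inequality and
`(a + b)² ≤ 2(a² + b²)` absorb the negative term of `Ψ` into half of `(1/τ)·d(v,w*)²`, at the cost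
of `(1/(2τ))·d(u,v)²`; since `Ψ(τ,u,v;v) = E(v) − (1/(4τ))·d(u,v)²`, half of this cost is recovered
on the right-hand side.
-/

theorem dist_sq_le_two_mul_add_sq {X : Type*} [PseudoMetricSpace X] (x y z : X) :
    dist x z ^ 2 ≤ 2 * (dist x y ^ 2 + dist y z ^ 2) :=
  calc
    dist x z ^ 2 ≤ (dist x y + dist y z) ^ 2 := by gcongr; exact dist_triangle x y z
    _ ≤ 2 * (dist x y ^ 2 + dist y z ^ 2) := add_sq_le

theorem half_inv_mul_dist_sq_le {X : Type*} [PseudoMetricSpace X] {τ : ℝ} (hτ : 0 < τ)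
    (u v w : X) :
    1 / (2 * τ) * dist v w ^ 2 ≤
      1 / τ * dist v w ^ 2 - 1 / (4 * τ) * dist u w ^ 2 + 1 / (2 * τ) * dist u v ^ 2 := by
  have absorb : 1 / (4 * τ) * dist u w ^ 2 ≤
      1 / (4 * τ) * (2 * (dist u v ^ 2 + dist v w ^ 2)) := by
    gcongr
    exact dist_sq_le_two_mul_add_sq u v w
  linear_combination absorb

section bdf2Psi

variable {X : Type*} [MetricSpace X] (E : X → EReal)

theorem add_half_inv_mul_dist_sq_le_bdf2Psi_add {τ : ℝ} (hτ : 0 < τ) (u v w : X) :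
    E w + ((1 / (2 * τ) * dist v w ^ 2 : ℝ) : EReal) ≤
      bdf2Psi E τ u v w + ((1 / (2 * τ) * dist u v ^ 2 : ℝ) : EReal) := by
  rw [bdf2Psi, add_right_comm, ← EReal.coe_add, add_comm (E w)]
  gcongr
  exact half_inv_mul_dist_sq_le hτ u v w

theorem bdf2Psi_self_add_half_inv_mul_dist_sq (τ : ℝ) (u v : X) :
    bdf2Psi E τ u v v + ((1 / (2 * τ) * dist u v ^ 2 : ℝ) : EReal) =
      E v + ((1 / (4 * τ) * dist u v ^ 2 : ℝ) : EReal) := by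
  rw [bdf2Psi, dist_self, add_right_comm, ← EReal.coe_add, add_comm (E v)]
  congr 2
  ring

theorem bdf2_one_step_energy_diminishing_general {τ : ℝ} (hτ : 0 < τ) {u v w : X}
    (hle : bdf2Psi E τ u v w ≤ bdf2Psi E τ u v v) :
    E w + ((1 / (2 * τ) * dist v w ^ 2 : ℝ) : EReal) ≤
      E v + ((1 / (4 * τ) * dist u v ^ 2 : ℝ) : EReal) :=
  calc
    E w + ((1 / (2 * τ) * dist v w ^ 2 : ℝ) : EReal)
    _ ≤ bdf2Psi E τ u v w + ((1 / (2 * τ) * dist u v ^ 2 : ℝ) : EReal) :=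
      add_half_inv_mul_dist_sq_le_bdf2Psi_add E hτ u v w
    _ ≤ bdf2Psi E τ u v v + ((1 / (2 * τ) * dist u v ^ 2 : ℝ) : EReal) := by gcongr
    _ = E v + ((1 / (4 * τ) * dist u v ^ 2 : ℝ) : EReal) :=
      bdf2Psi_self_add_half_inv_mul_dist_sq E τ u v

end bdf2Psi

/-- one-step almost-energy-diminishing estimate for the BDF2 variational step:
`E(w*) + (1/(2τ))d(v,w*)² ≤ E(v) + (1/(4τ))d(u,v)²` whenever `w*` minimizes `Ψ(τ,u,v;·)`. -/
theorem bdf2_one_step_energy_diminishing {X : Type*} [MetricSpace X]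
    (E : X → EReal) (hbot : ∀ w, E w ≠ ⊥)
    (τ : ℝ) (hτ : 0 < τ) (u v : X) (hu : E u ≠ ⊤) (hv : E v ≠ ⊤)
    (ws : X) (hmin : ∀ w : X, bdf2Psi E τ u v ws ≤ bdf2Psi E τ u v w) :
    E ws + ((1 / (2 * τ) * dist v ws ^ 2 : ℝ) : EReal)
      ≤ E v + ((1 / (4 * τ) * dist u v ^ 2 : ℝ) : EReal) :=
  bdf2_one_step_energy_diminishing_general E hτ (hmin v)
end

section
/- Let τ > 0 and let u_τ^{−1}, u_τ^0 ∈ D(E). Let (u_τ^k)_{k≥1} be a discrete BDF2 solution, i.e. each u_τ^k minimizes w ↦ Ψ(τ, u_τ^{k−2}, u_τ^{k−1}; w) over X. Then for every N ≥ 1: E(u_τ^N) + (1/(4τ))·Σ_{k=1}^{N} d(u_τ^{k−1}, u_τ^k)² ≤ E(u_τ^0) + (1/(4τ))·d(u_τ^{−1}, u_τ^0)². -/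
/-!
Comparing `w` with the previous point `v` in the minimality of `w` and estimating
`d(u,w)² ≤ 2 d(u,v)² + 2 d(v,w)²` shows that the modified energy `E v + (1/(4τ))·d(u,v)²` of two
consecutive points is a Lyapunov function: passing from `(u, v)` to `(v, w)` it decreases by at
least `(1/(4τ))·d(v,w)²`. Only real numbers are ever added to values of `E`,
and these can be cancelled in `EReal`, so the estimate telescopes there directly.
-/

lemma add_sum_range_le_of_forall_add_le {M : Type*} [AddCommMonoid M] [Preorder M]
    [AddLeftMono M] {F c : ℕ → M} (h : ∀ n, F (n + 1) + c n ≤ F n) (N : ℕ) :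
    F N + ∑ k ∈ Finset.range N, c k ≤ F 0 := by
  induction N with
  | zero => simp
  | succ n ih =>
    calc F (n + 1) + ∑ k ∈ Finset.range (n + 1), c k
        = F (n + 1) + c n + ∑ k ∈ Finset.range n, c k := by
          rw [Finset.sum_range_succ_comm, add_assoc]
      _ ≤ F n + ∑ k ∈ Finset.range n, c k := by gcongr; exact h n
      _ ≤ F 0 := ih

lemma add_le_add_of_add_le_add_of_addLECancellable {M : Type*} [AddCommMonoid M] [Preorder M]
    [AddLeftMono M] {a b p q r s : M} (hp : AddLECancellable p) (hab : p + a ≤ q + b)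
    (hrs : q + r ≤ p + s) : a + r ≤ b + s :=
  hp <| calc p + (a + r) = p + a + r := (add_assoc p a r).symm
    _ ≤ q + b + r := by gcongr
    _ = b + (q + r) := by rw [add_comm q, add_assoc]
    _ ≤ b + (p + s) := by gcongr
    _ = p + (b + s) := add_left_comm b p s

lemma ereal_coe_sum {ι : Type*} (s : Finset ι) (f : ι → ℝ) :
    ((∑ i ∈ s, f i : ℝ) : EReal) = ∑ i ∈ s, (f i : EReal) :=
  map_sum (⟨⟨Real.toEReal, EReal.coe_zero⟩, EReal.coe_add⟩ : ℝ →+ EReal) f s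

lemma dist_sq_le_two_mul_add {X : Type*} [PseudoMetricSpace X] (u v w : X) :
    dist u w ^ 2 ≤ 2 * (dist u v ^ 2 + dist v w ^ 2) :=
  (pow_le_pow_left₀ dist_nonneg (dist_triangle u v w) 2).trans add_sq_le

/-- The modified energy of the BDF2 scheme at two consecutive points `u, v`, the Lyapunov function
of the scheme. -/
noncomputable def bdf2ModifiedEnergy {X : Type*} [PseudoMetricSpace X] (E : X → EReal) (τ : ℝ)
    (u v : X) : EReal :=
  E v + ((1 / (4 * τ) * dist u v ^ 2 : ℝ) : EReal)

lemma le_bdf2ModifiedEnergy {X : Type*} [PseudoMetricSpace X] (E : X → EReal) {τ : ℝ} (hτ : 0 ≤ τ)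
    (u v : X) : E v ≤ bdf2ModifiedEnergy E τ u v :=
  le_add_of_nonneg_right (EReal.coe_nonneg.2 (by positivity))

section

variable {X : Type*} [MetricSpace X] {E : X → EReal} {τ : ℝ}

lemma bdf2ModifiedEnergy_add_le_of_bdf2Psi_le (hτ : 0 < τ) {u v w : X}
    (h : bdf2Psi E τ u v w ≤ bdf2Psi E τ u v v) :
    bdf2ModifiedEnergy E τ v w + ((1 / (4 * τ) * dist v w ^ 2 : ℝ) : EReal)
      ≤ bdf2ModifiedEnergy E τ u v := by
  rw [bdf2ModifiedEnergy, bdf2ModifiedEnergy, add_assoc, ← EReal.coe_add]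
  refine add_le_add_of_add_le_add_of_addLECancellable (EReal.addLECancellable_coe _) h ?_
  norm_cast
  have hweight : 1 / τ = 4 * (1 / (4 * τ)) := by field_simp
  have hdist : 1 / (4 * τ) * dist u w ^ 2 ≤ 1 / (4 * τ) * (2 * (dist u v ^ 2 + dist v w ^ 2)) := by
    gcongr
    exact dist_sq_le_two_mul_add u v w
  rw [dist_self, hweight]
  linarith

theorem bdf2_energy_estimate_general (hτ : 0 < τ) {u : ℕ → X}
    (hu : ∀ k, bdf2Psi E τ (u k) (u (k + 1)) (u (k + 2))
      ≤ bdf2Psi E τ (u k) (u (k + 1)) (u (k + 1))) (N : ℕ) :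
    bdf2ModifiedEnergy E τ (u N) (u (N + 1))
        + ((1 / (4 * τ) * ∑ k ∈ Finset.range N, dist (u (k + 1)) (u (k + 2)) ^ 2 : ℝ) : EReal)
      ≤ bdf2ModifiedEnergy E τ (u 0) (u 1) := by
  rw [Finset.mul_sum, ereal_coe_sum]
  exact add_sum_range_le_of_forall_add_le (F := fun k => bdf2ModifiedEnergy E τ (u k) (u (k + 1)))
    (fun k => bdf2ModifiedEnergy_add_le_of_bdf2Psi_le hτ (hu k)) N

end

/-- telescoped energy estimate for a discrete BDF2 solution.
Here `u k` encodes `u_τ^{k−1}`, i.e. `u 0 = u_τ^{−1}`, `u 1 = u_τ^0`, and each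
`u (k+2) = u_τ^{k+1}` minimizes `w ↦ Ψ(τ, u_τ^{k−1}, u_τ^k; w)`. Then for every `N ≥ 1`,
`E(u_τ^N) + (1/(4τ))·Σ_{k=1}^{N} d(u_τ^{k−1},u_τ^k)² ≤ E(u_τ^0) + (1/(4τ))·d(u_τ^{−1},u_τ^0)²`. -/
theorem bdf2_energy_estimate {X : Type*} [MetricSpace X]
    (E : X → EReal) (hbot : ∀ w, E w ≠ ⊥)
    (τ : ℝ) (hτ : 0 < τ) (u : ℕ → X) (h0 : E (u 0) ≠ ⊤) (h1 : E (u 1) ≠ ⊤)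
    (hmin : ∀ k : ℕ, ∀ w : X,
      bdf2Psi E τ (u k) (u (k + 1)) (u (k + 2)) ≤ bdf2Psi E τ (u k) (u (k + 1)) w)
    (N : ℕ) (hN : 1 ≤ N) :
    E (u (N + 1))
        + ((1 / (4 * τ) * ∑ k ∈ Finset.range N, dist (u (k + 1)) (u (k + 2)) ^ 2 : ℝ) : EReal)
      ≤ E (u 1) + ((1 / (4 * τ) * dist (u 0) (u 1) ^ 2 : ℝ) : EReal) :=
  (add_le_add_left (le_bdf2ModifiedEnergy E hτ.le (u N) (u (N + 1))) _).trans
    (bdf2_energy_estimate_general hτ (fun k => hmin k (u (k + 1))) N)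
end

section
/- Assume (E1), (E2) and (E3) with λ ≤ 0 and (−λ)·τ* ≤ 1/2, fix u⁰ ∈ X, a time horizon T > 0, and constants K₀, K₁, K₂ ≥ 0. Then there exists a constant C, depending only on K₀, K₁, K₂, T, τ*, c*, and the fixed points u*, u⁰, such that the following holds: for every τ ∈ (0, τ*) and every choice of initial data u_τ^{−1}, u_τ^0 ∈ X satisfying (I0) d(u_τ^0, u⁰) ≤ K₀τ, (I1) E(u_τ^0) ≤ K₁ and E(u_τ^{−1}) ≤ K₁, (I2) d(u_τ^{−1}, u_τ^0) ≤ K₂τ, the corresponding discrete BDF2 solution (u_τ^k)_{k≥1} satisfies, for every N ∈ ℕ with Nτ ≤ T: (i) Σ_{k=1}^{N} (1/(2τ))·d(u_τ^{k−1}, u_τ^k)² ≤ C; (ii) |E(u_τ^N)| ≤ C; (iii) d(u*, u_τ^N)² ≤ C. -/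
open Filter

/-!
Comparing the minimizer `u_τ^k` with the competitor `u_τ^{k-1}`, and splitting
`d(u_τ^{k-2}, u_τ^k)²` by Young's inequality with weight `ε`, gives
`E(u_τ^k) + (3 - 1/ε)/(4τ)·d(u_τ^{k-1}, u_τ^k)² ≤ E(u_τ^{k-1}) + ε/(4τ)·d(u_τ^{k-2}, u_τ^{k-1})²`.
With `ε = 1` the energy `E + d²/(4τ)` decreases and each step dissipates `d²/(4τ)`, which bounds the
sum of squares by the final distance to `u*`. With `ε = 1 + 3τ/τ*` the gain is large enough, for all
`τ ≤ τ*` at once, to absorb the growth of the distance to `u*`: a Lyapunov functional combining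
energy, distance and last increment grows by a factor at most `1 + 81τ/τ*` per step, so it stays
bounded up to time `T`.
-/

theorem dist_sq_le_add_of_pos {X : Type*} [PseudoMetricSpace X] {ε : ℝ} (hε : 0 < ε) (x y z : X) :
    dist x z ^ 2 ≤ (1 + ε) * dist x y ^ 2 + (1 + ε⁻¹) * dist y z ^ 2 :=
  calc dist x z ^ 2 ≤ (dist x y + dist y z) ^ 2 := by gcongr; exact dist_triangle x y z
    _ = dist x y ^ 2 + 2 * dist x y * dist y z + dist y z ^ 2 := add_sq (dist x y) (dist y z)
    _ ≤ dist x y ^ 2 + (ε * dist x y ^ 2 + ε⁻¹ * dist y z ^ 2) + dist y z ^ 2 := by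
      gcongr
      exact two_mul_le_add_mul_sq hε
    _ = (1 + ε) * dist x y ^ 2 + (1 + ε⁻¹) * dist y z ^ 2 := by ring

section Step

variable {X : Type*} [MetricSpace X] {E : X → EReal} {τ τs c a b ε : ℝ} {p x y z : X}

theorem energy_add_le_of_bdf2Psi_le (hτ : 0 < τ) (hε : 0 < ε) (hy : E y = a) (hz : E z = b)
    (h : bdf2Psi E τ x y z ≤ bdf2Psi E τ x y y) :
    b + (3 - ε⁻¹) / (4 * τ) * dist y z ^ 2 ≤ a + ε / (4 * τ) * dist x y ^ 2 := by
  have hmin : 1 / τ * dist y z ^ 2 - 1 / (4 * τ) * dist x z ^ 2 + b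
      ≤ -(1 / (4 * τ) * dist x y ^ 2) + a := by
    simp only [bdf2Psi, hy, hz, dist_self] at h
    norm_cast at h
    linarith
  have hyoung : 1 / (4 * τ) * dist x z ^ 2
      ≤ 1 / (4 * τ) * ((1 + ε) * dist x y ^ 2 + (1 + ε⁻¹) * dist y z ^ 2) := by
    gcongr
    exact dist_sq_le_add_of_pos hε x y z
  have hcoeff : (3 - ε⁻¹) / (4 * τ) = 1 / τ - 1 / (4 * τ) * (1 + ε⁻¹) := by
    field_simp
    ring
  rw [hcoeff]
  linear_combination hmin + hyoung

/-- The Lyapunov functional of a BDF2 step from `x` to `y`, where `a` stands for `E y`, `p` for the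
point `u*` of (E2) and `c` for a lower bound in (E2). The weight `9 / (16τ*)` exceeds the
`1 / (2τ*)` of (E2), which makes the functional coercive in `dist p y`; the weights are balanced so
that `bdf2Lyapunov_weights_le` becomes an equality at `τ = τ*`. -/
noncomputable def bdf2Lyapunov (τ τs c : ℝ) (p x y : X) (a : ℝ) : ℝ :=
  a - c + 9 / (16 * τs) * dist p y ^ 2 + 1 / (4 * τ * (1 + 3 * τ / τs)) * dist x y ^ 2

theorem dist_sq_add_dist_sq_le_bdf2Lyapunov (hc : c ≤ 1 / (2 * τs) * dist p y ^ 2 + a) :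
    1 / (16 * τs) * dist p y ^ 2 + 1 / (4 * τ * (1 + 3 * τ / τs)) * dist x y ^ 2
      ≤ bdf2Lyapunov τ τs c p x y a := by
  rw [bdf2Lyapunov]
  linear_combination hc

theorem bdf2Lyapunov_le_add (hτ : 0 < τ) (hτs : 0 < τs) :
    bdf2Lyapunov τ τs c p x y a
      ≤ a + 1 / (4 * τ) * dist x y ^ 2 - c + 9 / (16 * τs) * dist p y ^ 2 := by
  have hweight : 1 ≤ 1 + 3 * τ / τs := le_add_of_nonneg_right (by positivity)
  have hincr : 1 / (4 * τ * (1 + 3 * τ / τs)) * dist x y ^ 2 ≤ 1 / (4 * τ) * dist x y ^ 2 := by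
    gcongr 1 / ?_ * dist x y ^ 2
    exact le_mul_of_one_le_right (by positivity) hweight
  rw [bdf2Lyapunov]
  linarith

theorem bdf2Lyapunov_weights_le (hτ : 0 < τ) (hττs : τ ≤ τs) :
    9 / (16 * τs) * (1 + (9 * τ / τs)⁻¹) + 1 / (4 * τ * (1 + 3 * τ / τs))
      ≤ (3 - (1 + 3 * τ / τs)⁻¹) / (4 * τ) := by
  have hτs : 0 < τs := hτ.trans_le hττs
  have hdiff : (3 - (1 + 3 * τ / τs)⁻¹) / (4 * τ)
      - (9 / (16 * τs) * (1 + (9 * τ / τs)⁻¹) + 1 / (4 * τ * (1 + 3 * τ / τs)))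
      = 3 * (9 * τ + τs) * (τs - τ) / (16 * τ * τs * (τs + 3 * τ)) := by
    field_simp
    ring
  rw [← sub_nonneg, hdiff]
  exact div_nonneg (mul_nonneg (by positivity) (sub_nonneg.2 hττs)) (by positivity)

theorem bdf2Lyapunov_le_of_bdf2Psi_le (hτ : 0 < τ) (hττs : τ ≤ τs) (hy : E y = a) (hz : E z = b)
    (h : bdf2Psi E τ x y z ≤ bdf2Psi E τ x y y) :
    bdf2Lyapunov τ τs c p y z b
      ≤ a - c + 9 / (16 * τs) * ((1 + 9 * τ / τs) * dist p y ^ 2)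
        + (1 + 3 * τ / τs) / (4 * τ) * dist x y ^ 2 := by
  have hτs : 0 < τs := hτ.trans_le hττs
  have henergy := energy_add_le_of_bdf2Psi_le hτ (ε := 1 + 3 * τ / τs) (by positivity) hy hz h
  have hdist : 9 / (16 * τs) * dist p z ^ 2 ≤ 9 / (16 * τs)
      * ((1 + 9 * τ / τs) * dist p y ^ 2 + (1 + (9 * τ / τs)⁻¹) * dist y z ^ 2) := by
    gcongr
    exact dist_sq_le_add_of_pos (by positivity) p y z
  have hweights := mul_le_mul_of_nonneg_right (bdf2Lyapunov_weights_le hτ hττs)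
    (sq_nonneg (dist y z))
  rw [bdf2Lyapunov]
  linear_combination henergy + hdist + hweights

theorem bdf2Lyapunov_le_mul_of_bdf2Psi_le (hτ : 0 < τ) (hττs : τ ≤ τs)
    (hy : E y = a) (hz : E z = b) (h : bdf2Psi E τ x y z ≤ bdf2Psi E τ x y y)
    (hc : c ≤ 1 / (2 * τs) * dist p y ^ 2 + a) :
    bdf2Lyapunov τ τs c p y z b ≤ (1 + 81 * τ / τs) * bdf2Lyapunov τ τs c p x y a := by
  have hτs : 0 < τs := hτ.trans_le hττs
  have hr : τ / τs ≤ 1 := (div_le_one hτs).2 hττs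
  have hincr : (1 + 3 * τ / τs) / (4 * τ)
      ≤ (1 + 81 * τ / τs) * (1 / (4 * τ * (1 + 3 * τ / τs))) := by
    have hsq : (1 + 3 * τ / τs) * (1 + 3 * τ / τs) ≤ 1 + 81 * τ / τs := by
      have hrr : 0 ≤ τ / τs * (1 - τ / τs) := mul_nonneg (by positivity) (sub_nonneg.2 hr)
      have hr₀ : 0 ≤ τ / τs := by positivity
      linear_combination 9 * hrr + 66 * hr₀
    rw [mul_one_div, div_le_div_iff₀ (by positivity) (by positivity)]
    linear_combination 4 * τ * hsq
  have hincr' := mul_le_mul_of_nonneg_right hincr (sq_nonneg (dist x y))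
  have hcoercive := mul_le_mul_of_nonneg_left hc (a := 81 * τ / τs) (by positivity)
  refine (bdf2Lyapunov_le_of_bdf2Psi_le hτ hττs hy hz h).trans ?_
  rw [bdf2Lyapunov]
  linear_combination hincr' + hcoercive

theorem initial_energy_le {K₁ K₂ : ℝ} (hτ : 0 < τ) (hττs : τ ≤ τs) (ha : a ≤ K₁)
    (hxy : dist x y ≤ K₂ * τ) : a + 1 / (4 * τ) * dist x y ^ 2 ≤ K₁ + K₂ ^ 2 * τs / 4 :=
  calc a + 1 / (4 * τ) * dist x y ^ 2 ≤ K₁ + 1 / (4 * τ) * (K₂ * τ) ^ 2 := by gcongr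
    _ = K₁ + K₂ ^ 2 * τ / 4 := by field_simp
    _ ≤ K₁ + K₂ ^ 2 * τs / 4 := by gcongr

theorem bdf2Lyapunov_initial_le {K₀ K₁ K₂ : ℝ} {q : X} (hτ : 0 < τ) (hττs : τ ≤ τs) (ha : a ≤ K₁)
    (hxy : dist x y ≤ K₂ * τ) (hyq : dist y q ≤ K₀ * τ) :
    bdf2Lyapunov τ τs c p x y a
      ≤ K₁ + K₂ ^ 2 * τs / 4 - c + 9 / (16 * τs) * (dist p q + K₀ * τs) ^ 2 := by
  have hτs : 0 < τs := hτ.trans_le hττs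
  have hK₀ : 0 ≤ K₀ := nonneg_of_mul_nonneg_left (dist_nonneg.trans hyq) hτ
  have hdist : dist p y ≤ dist p q + K₀ * τs :=
    calc dist p y ≤ dist p q + dist y q := dist_triangle_right p y q
      _ ≤ dist p q + K₀ * τs := by gcongr; exact hyq.trans (by gcongr)
  have henergy := initial_energy_le hτ hττs ha hxy
  calc bdf2Lyapunov τ τs c p x y a
      ≤ a + 1 / (4 * τ) * dist x y ^ 2 - c + 9 / (16 * τs) * dist p y ^ 2 :=
        bdf2Lyapunov_le_add hτ hτs
    _ ≤ _ := by gcongr ?_ - c + 9 / (16 * τs) * ?_ ^ 2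

end Step

/-- A discrete BDF2 solution, in the indexing of `bdf2_classical_estimates`: `u 0` and `u 1` are
arbitrary initial data and every later term minimizes the penalization of its two predecessors. -/
def IsBDF2Solution {X : Type*} [MetricSpace X] (E : X → EReal) (τ : ℝ) (u : ℕ → X) : Prop :=
  ∀ k : ℕ, ∀ w : X,
    bdf2Psi E τ (u k) (u (k + 1)) (u (k + 2)) ≤ bdf2Psi E τ (u k) (u (k + 1)) w

namespace IsBDF2Solution

variable {X : Type*} [MetricSpace X] {E : X → EReal} {τ τs c : ℝ} {p : X} {u : ℕ → X} {e : ℕ → ℝ}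

theorem energy_ne_top (hu : IsBDF2Solution E τ u) (h₁ : E (u 1) ≠ ⊤) (k : ℕ) :
    E (u (k + 1)) ≠ ⊤ := by
  induction k with
  | zero => exact h₁
  | succ k ih =>
    intro htop
    have hmin := hu k (u (k + 1))
    rw [bdf2Psi, htop, EReal.coe_add_top, top_le_iff, bdf2Psi] at hmin
    exact EReal.add_ne_top (EReal.coe_ne_top _) ih hmin

theorem exists_energy_eq_coe (hu : IsBDF2Solution E τ u) (h₁ : E (u 1) ≠ ⊤)
    (hE : ∀ v, (c : EReal) ≤ ((1 / (2 * τs) * dist p v ^ 2 : ℝ) : EReal) + E v) :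
    ∃ e : ℕ → ℝ, (∀ k, E (u (k + 1)) = e k)
      ∧ ∀ k, c ≤ 1 / (2 * τs) * dist p (u (k + 1)) ^ 2 + e k := by
  have hbot (v : X) : E v ≠ ⊥ := fun hv => by simpa [hv] using hE v
  have he (k : ℕ) : E (u (k + 1)) = (E (u (k + 1))).toReal :=
    (EReal.coe_toReal (hu.energy_ne_top h₁ k) (hbot _)).symm
  refine ⟨_, he, fun k => ?_⟩
  have hlower := hE (u (k + 1))
  rw [he k] at hlower
  exact_mod_cast hlower

theorem sum_dist_sq_le_energy_sub (hu : IsBDF2Solution E τ u) (hτ : 0 < τ)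
    (he : ∀ k, E (u (k + 1)) = e k) (n : ℕ) :
    ∑ k ∈ Finset.range n, 1 / (4 * τ) * dist (u (k + 1)) (u (k + 2)) ^ 2
      ≤ e 0 + 1 / (4 * τ) * dist (u 0) (u 1) ^ 2 - e n := by
  let F : ℕ → ℝ := fun k => e k + 1 / (4 * τ) * dist (u k) (u (k + 1)) ^ 2
  have hdissip (k : ℕ) : 1 / (4 * τ) * dist (u (k + 1)) (u (k + 2)) ^ 2 ≤ F k - F (k + 1) := by
    have hstep := energy_add_le_of_bdf2Psi_le hτ one_pos (he k) (he (k + 1)) (hu k (u (k + 1)))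
    linear_combination hstep
  calc _ ≤ ∑ k ∈ Finset.range n, (F k - F (k + 1)) := Finset.sum_le_sum fun k _ => hdissip k
    _ = F 0 - F n := Finset.sum_range_sub' F n
    _ ≤ F 0 - e n := sub_le_sub_left (le_add_of_nonneg_right (by positivity)) _

theorem bdf2Lyapunov_le_mul_exp (hu : IsBDF2Solution E τ u) (hτ : 0 < τ) (hττs : τ ≤ τs)
    (he : ∀ k, E (u (k + 1)) = e k)
    (hc : ∀ k, c ≤ 1 / (2 * τs) * dist p (u (k + 1)) ^ 2 + e k) (n : ℕ) :
    bdf2Lyapunov τ τs c p (u n) (u (n + 1)) (e n)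
      ≤ bdf2Lyapunov τ τs c p (u 0) (u 1) (e 0) * Real.exp (n * (81 * τ / τs)) := by
  have hτs : 0 < τs := hτ.trans_le hττs
  have hpos : 0 ≤ bdf2Lyapunov τ τs c p (u 0) (u 1) (e 0) :=
    le_trans (by positivity) (dist_sq_add_dist_sq_le_bdf2Lyapunov (hc 0))
  have hgronwall := discrete_gronwall (n₀ := 0) (c := fun _ => 81 * τ / τs) (b := fun _ => 0)
    (u := fun k => bdf2Lyapunov τ τs c p (u k) (u (k + 1)) (e k)) hpos
    (fun k _ => by
      rw [add_zero]
      exact bdf2Lyapunov_le_mul_of_bdf2Psi_le hτ hττs (he k) (he (k + 1)) (hu k _) (hc k))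
    (fun _ _ => by positivity) (fun _ _ => le_rfl) n.zero_le
  simpa using hgronwall

theorem estimates_of_bdf2Lyapunov_le (hu : IsBDF2Solution E τ u) (hτ : 0 < τ) (hτs : 0 < τs)
    (he : ∀ k, E (u (k + 1)) = e k) {M : ℝ} {N : ℕ}
    (hc : c ≤ 1 / (2 * τs) * dist p (u (N + 1)) ^ 2 + e N)
    (hstart : e 0 + 1 / (4 * τ) * dist (u 0) (u 1) ^ 2 - c ≤ M)
    (hend : bdf2Lyapunov τ τs c p (u N) (u (N + 1)) (e N) ≤ M) :
    ∑ k ∈ Finset.range N, 1 / (2 * τ) * dist (u (k + 1)) (u (k + 2)) ^ 2 ≤ 18 * M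
      ∧ (c - 8 * M ≤ e N ∧ e N ≤ c + M)
      ∧ dist p (u (N + 1)) ^ 2 ≤ 16 * τs * M := by
  have hincr : 0 ≤ 1 / (4 * τ * (1 + 3 * τ / τs)) * dist (u N) (u (N + 1)) ^ 2 := by positivity
  have hdist : 1 / (16 * τs) * dist p (u (N + 1)) ^ 2 ≤ M := by
    linarith [dist_sq_add_dist_sq_le_bdf2Lyapunov (τ := τ) (x := u N) hc]
  have hlower : c - 8 * M ≤ e N := by linear_combination hc + 8 * hdist
  refine ⟨?_, ⟨hlower, ?_⟩, ?_⟩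
  · calc ∑ k ∈ Finset.range N, 1 / (2 * τ) * dist (u (k + 1)) (u (k + 2)) ^ 2
        = 2 * ∑ k ∈ Finset.range N, 1 / (4 * τ) * dist (u (k + 1)) (u (k + 2)) ^ 2 := by
          rw [Finset.mul_sum]
          exact Finset.sum_congr rfl fun k _ => by ring
      _ ≤ 2 * (e 0 + 1 / (4 * τ) * dist (u 0) (u 1) ^ 2 - e N) := by
          gcongr
          exact hu.sum_dist_sq_le_energy_sub hτ he N
      _ ≤ 18 * M := by linarith
  · have hdist_nonneg : 0 ≤ 9 / (16 * τs) * dist p (u (N + 1)) ^ 2 := by positivity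
    rw [bdf2Lyapunov] at hend
    linarith
  · calc dist p (u (N + 1)) ^ 2 = 16 * τs * (1 / (16 * τs) * dist p (u (N + 1)) ^ 2) := by
          field_simp
      _ ≤ 16 * τs * M := by gcongr

end IsBDF2Solution

theorem bdf2_classical_estimates_general {X : Type*} [MetricSpace X] (τs c : ℝ) (ustar u0pt : X)
    (T K₀ K₁ K₂ : ℝ) :
    ∃ C : ℝ, ∀ E : X → EReal,
      (∀ v, (c : EReal) ≤ (((1 / (2 * τs)) * dist ustar v ^ 2 : ℝ) : EReal) + E v) →
      ∀ τ ∈ Set.Ioc (0 : ℝ) τs, ∀ u : ℕ → X, IsBDF2Solution E τ u →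
      dist (u 1) u0pt ≤ K₀ * τ → E (u 1) ≤ (K₁ : EReal) → dist (u 0) (u 1) ≤ K₂ * τ →
      ∀ N : ℕ, (N : ℝ) * τ ≤ T →
        (∑ k ∈ Finset.range N, (1 / (2 * τ)) * dist (u (k + 1)) (u (k + 2)) ^ 2 ≤ C)
        ∧ (((-C : ℝ) : EReal) ≤ E (u (N + 1)) ∧ E (u (N + 1)) ≤ ((C : ℝ) : EReal))
        ∧ dist ustar (u (N + 1)) ^ 2 ≤ C := by
  let B := K₁ + K₂ ^ 2 * τs / 4 - c + 9 / (16 * τs) * (dist ustar u0pt + K₀ * τs) ^ 2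
  let M := B * Real.exp (81 * T / τs)
  refine ⟨|c| + 18 * M + 16 * τs * M, fun E hE τ ⟨hτ, hττs⟩ u hu hI0 hI1 hI2 N hN => ?_⟩
  have hτs : 0 < τs := hτ.trans_le hττs
  obtain ⟨e, he, hc⟩ := hu.exists_energy_eq_coe (ne_top_of_le_ne_top (EReal.coe_ne_top K₁) hI1) hE
  have he₀ : e 0 ≤ K₁ := EReal.coe_le_coe_iff.1 ((he 0).symm.trans_le hI1)
  have hL₀ : bdf2Lyapunov τ τs c ustar (u 0) (u 1) (e 0) ≤ B :=
    bdf2Lyapunov_initial_le hτ hττs he₀ hI2 hI0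
  have hB : 0 ≤ B :=
    le_trans (by positivity) ((dist_sq_add_dist_sq_le_bdf2Lyapunov (hc 0)).trans hL₀)
  have hT : 0 ≤ T := le_trans (by positivity) hN
  have hstart : e 0 + 1 / (4 * τ) * dist (u 0) (u 1) ^ 2 - c ≤ M :=
    calc _ ≤ K₁ + K₂ ^ 2 * τs / 4 - c := sub_le_sub_right (initial_energy_le hτ hττs he₀ hI2) c
      _ ≤ B := le_add_of_nonneg_right (by positivity)
      _ ≤ M := le_mul_of_one_le_right hB (Real.one_le_exp (by positivity))
  have htime : N * (81 * τ / τs) ≤ 81 * T / τs := by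
    rw [← mul_div_assoc, mul_left_comm]
    gcongr
  have hend : bdf2Lyapunov τ τs c ustar (u N) (u (N + 1)) (e N) ≤ M :=
    (hu.bdf2Lyapunov_le_mul_exp hτ hττs he hc N).trans
      (mul_le_mul hL₀ (Real.exp_le_exp.2 htime) (Real.exp_nonneg _) hB)
  obtain ⟨hsum, ⟨hlower, hupper⟩, hdist⟩ :=
    hu.estimates_of_bdf2Lyapunov_le hτ hτs he (hc N) hstart hend
  have hM : 0 ≤ M := mul_nonneg hB (Real.exp_nonneg _)
  have hτsM : 0 ≤ 16 * τs * M := mul_nonneg (by positivity) hM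
  rw [he N, EReal.coe_le_coe_iff, EReal.coe_le_coe_iff]
  refine ⟨?_, ⟨?_, ?_⟩, ?_⟩ <;> linarith [le_abs_self c, neg_abs_le c]

/-- classical estimates for discrete BDF2 solutions.
In a discrete solution `u : ℕ → X`, the index is shifted by one: `u 0 = u_τ^{−1}`,
`u 1 = u_τ^0`, and `u (k+2) = u_τ^{k+1}` minimizes `w ↦ Ψ(τ, u_τ^{k−1}, u_τ^k; w)`.
Under (E1)–(E3) and (I0)–(I2) there is a constant `C` (depending only on the fixed data)
such that for all `N` with `Nτ ≤ T`:
(i) `Σ_{k=1}^N (1/(2τ))·d(u_τ^{k−1},u_τ^k)² ≤ C`, (ii) `|E(u_τ^N)| ≤ C`,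
(iii) `d(u*,u_τ^N)² ≤ C`. -/
theorem bdf2_classical_estimates {X : Type*} [MetricSpace X] [CompleteSpace X]
    [TopologicalSpace.SeparableSpace X]
    (E : X → EReal) (hbot : ∀ w, E w ≠ ⊥) (hdom : ∃ w, E w ≠ ⊤)
    (τs lam : ℝ) (hτs : 0 < τs) (hlam : lam ≤ 0) (hlamτs : (-lam) * τs ≤ 1 / 2)
    (hE1 : ∀ (un : ℕ → X) (x : X), Tendsto un atTop (nhds x) →
      E x ≤ liminf (fun n => E (un n)) atTop)
    (ustar : X) (cstar : EReal)
    (hcstar : cstar = ⨅ v : X, (((1 / (2 * τs)) * dist ustar v ^ 2 : ℝ) : EReal) + E v)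
    (hE2 : ⊥ < cstar)
    (hE3 : ∀ τ ∈ Set.Ioo (0 : ℝ) τs, ∀ u v γ₀ γ₁ : X, E γ₀ ≠ ⊤ → E γ₁ ≠ ⊤ →
      ∃ γ : ℝ → X, ContinuousOn γ (Set.Icc 0 1) ∧ γ 0 = γ₀ ∧ γ 1 = γ₁ ∧
        ∀ s ∈ Set.Icc (0 : ℝ) 1,
          bdf2Psi E τ u v (γ s)
            ≤ ((1 - s : ℝ) : EReal) * bdf2Psi E τ u v γ₀
              + ((s : ℝ) : EReal) * bdf2Psi E τ u v γ₁
              - ((1 / 2 * (3 / (2 * τ) + lam) * s * (1 - s) * dist γ₀ γ₁ ^ 2 : ℝ) : EReal))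
    (u0pt : X) (T : ℝ) (hT : 0 < T)
    (K₀ K₁ K₂ : ℝ) (hK₀ : 0 ≤ K₀) (hK₁ : 0 ≤ K₁) (hK₂ : 0 ≤ K₂) :
    ∃ C : ℝ, ∀ τ ∈ Set.Ioo (0 : ℝ) τs, ∀ u : ℕ → X,
      (∀ k : ℕ, ∀ w : X,
        bdf2Psi E τ (u k) (u (k + 1)) (u (k + 2)) ≤ bdf2Psi E τ (u k) (u (k + 1)) w) →
      dist (u 1) u0pt ≤ K₀ * τ →
      E (u 1) ≤ (K₁ : EReal) → E (u 0) ≤ (K₁ : EReal) →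
      dist (u 0) (u 1) ≤ K₂ * τ →
      ∀ N : ℕ, (N : ℝ) * τ ≤ T →
        (∑ k ∈ Finset.range N, (1 / (2 * τ)) * dist (u (k + 1)) (u (k + 2)) ^ 2 ≤ C)
        ∧ (((-C : ℝ) : EReal) ≤ E (u (N + 1)) ∧ E (u (N + 1)) ≤ ((C : ℝ) : EReal))
        ∧ dist ustar (u (N + 1)) ^ 2 ≤ C := by
  obtain ⟨c, -, hc⟩ := EReal.lt_iff_exists_real_btwn.1 hE2
  obtain ⟨C, hC⟩ := bdf2_classical_estimates_general τs c ustar u0pt T K₀ K₁ K₂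
  have hE (v : X) : (c : EReal) ≤ (((1 / (2 * τs)) * dist ustar v ^ 2 : ℝ) : EReal) + E v :=
    hc.le.trans (hcstar.trans_le (iInf_le _ v))
  exact ⟨C, fun τ hτ u hu hI0 hI1 _ => hC E hE τ (Set.Ioo_subset_Ioc_self hτ) u hu hI0 hI1⟩
end

section
/- Assume (E3) with λ ≤ 0 and (−λ)·τ* ≤ 1/2. Let τ ∈ (0, τ*), let u, v ∈ D(E), and let w* ∈ D(E) be a minimizer of w ↦ Ψ(τ,u,v;w) over X. Then the discrete evolution variational inequality holds: for every w ∈ D(E), (3/(4τ) + λ/2)·d(w*,w)² − (1/τ)·d(v,w)² + (1/(4τ))·d(u,w)² ≤ E(w) − E(w*) − (1/τ)·d(v,w*)² + (1/(4τ))·d(u,w*)². -/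
/-- `κ`-strong convexity of a functional `F : X → [-∞, +∞]` along a curve `γ` parametrized by
`[0, 1]`, as used for gradient flows in metric spaces. The curve need be neither a geodesic nor
continuous, and its values outside `[0, 1]` are irrelevant. In `EReal` one has `0 * ⊤ = 0` and
`⊤ + ⊥ = ⊥`. -/
def StrongConvexAlong {X : Type*} [PseudoMetricSpace X] (κ : ℝ) (F : X → EReal) (γ : ℝ → X) :
    Prop :=
  ∀ s ∈ Set.Icc (0 : ℝ) 1,
    F (γ s) ≤ ((1 - s : ℝ) : EReal) * F (γ 0) + ((s : ℝ) : EReal) * F (γ 1)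
      - ((1 / 2 * κ * s * (1 - s) * dist (γ 0) (γ 1) ^ 2 : ℝ) : EReal)

theorem add_le_of_forall_le_convex_combination_sub {a b c : ℝ}
    (h : ∀ s ∈ Set.Ioo (0 : ℝ) 1, a ≤ (1 - s) * a + s * b - c * s * (1 - s)) :
    a + c ≤ b := by
  -- Divide the hypothesis by `s` and let `s ↓ 0`.
  have tendsto_left : Filter.Tendsto (fun s : ℝ => a + c * (1 - s)) (nhdsWithin 0 (Set.Ioi 0))
      (nhds (a + c)) := by
    have hcont : Continuous fun s : ℝ => a + c * (1 - s) := by fun_prop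
    simpa using (hcont.tendsto 0).mono_left nhdsWithin_le_nhds
  refine le_of_tendsto tendsto_left ?_
  filter_upwards [Ioo_mem_nhdsGT zero_lt_one] with s hs
  have hmul : s * (a + c * (1 - s)) ≤ s * b := by linarith [h s hs]
  exact le_of_mul_le_mul_left hmul hs.1

theorem StrongConvexAlong.add_dist_sq_le {X : Type*} [PseudoMetricSpace X] {κ : ℝ}
    {F : X → EReal} {γ : ℝ → X} (hF : StrongConvexAlong κ F γ) (hfin : F (γ 0) ≠ ⊤)
    (hmin : ∀ s ∈ Set.Ioo (0 : ℝ) 1, F (γ 0) ≤ F (γ s)) :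
    F (γ 0) + ((κ / 2 * dist (γ 0) (γ 1) ^ 2 : ℝ) : EReal) ≤ F (γ 1) := by
  have hle := fun s hs => (hmin s hs).trans (hF s (Set.Ioo_subset_Icc_self hs))
  induction h₀ : F (γ 0) with
  | bot => simp only [EReal.bot_add, bot_le]
  | top => exact absurd h₀ hfin
  | coe a =>
    rw [h₀] at hle
    induction h₁ : F (γ 1) with
    | top => exact le_top
    | bot =>
      have hhalf := hle (1 / 2) (by norm_num)
      rw [h₁, EReal.coe_mul_bot_of_pos one_half_pos, EReal.add_bot, EReal.bot_sub] at hhalf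
      exact absurd (le_bot_iff.mp hhalf) (EReal.coe_ne_bot a)
    | coe b =>
      rw [h₁] at hle
      norm_cast at hle ⊢
      exact add_le_of_forall_le_convex_combination_sub fun s hs =>
        (hle s hs).trans_eq (by ring)

theorem bdf2_discrete_EVI_general {X : Type*} [MetricSpace X] {E : X → EReal}
    (hbot : ∀ x, E x ≠ ⊥) {τ lam : ℝ} (hτ : τ ≠ 0) {u v ws w : X} (hws : E ws ≠ ⊤)
    (hmin : ∀ x, bdf2Psi E τ u v ws ≤ bdf2Psi E τ u v x)
    (hconv : ∃ γ : ℝ → X, γ 0 = ws ∧ γ 1 = w ∧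
      StrongConvexAlong (3 / (2 * τ) + lam) (bdf2Psi E τ u v) γ) :
    (((3 / (4 * τ) + lam / 2) * dist ws w ^ 2 - (1 / τ) * dist v w ^ 2
        + (1 / (4 * τ)) * dist u w ^ 2 : ℝ) : EReal)
      ≤ E w - E ws
        + ((-(1 / τ) * dist v ws ^ 2 + (1 / (4 * τ)) * dist u ws ^ 2 : ℝ) : EReal) := by
  obtain ⟨γ, rfl, rfl, hγ⟩ := hconv
  have hfin : bdf2Psi E τ u v (γ 0) ≠ ⊤ := EReal.add_ne_top (EReal.coe_ne_top _) hws
  have growth := hγ.add_dist_sq_le hfin fun s _ => hmin (γ s)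
  have hcoef : (3 / (2 * τ) + lam) / 2 = 3 / (4 * τ) + lam / 2 := by field_simp; ring
  rw [hcoef] at growth
  unfold bdf2Psi at growth
  lift E (γ 0) to ℝ using ⟨hws, hbot (γ 0)⟩ with e₀
  induction h₁ : E (γ 1) with
  | bot => exact absurd h₁ (hbot (γ 1))
  | top => simp only [EReal.top_sub_coe, EReal.top_add_coe, le_top]
  | coe e₁ =>
    rw [h₁] at growth
    norm_cast at growth ⊢
    linarith

/-- the discrete evolution variational inequality satisfied by one
variational BDF2 step, under assumption (E3). -/
theorem bdf2_discrete_EVI {X : Type*} [MetricSpace X] [CompleteSpace X]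
    [TopologicalSpace.SeparableSpace X]
    (E : X → EReal) (hbot : ∀ w, E w ≠ ⊥)
    (τs lam : ℝ) (hτs : 0 < τs) (hlam : lam ≤ 0) (hlamτs : (-lam) * τs ≤ 1 / 2)
    (hE3 : ∀ τ ∈ Set.Ioo (0 : ℝ) τs, ∀ u v γ₀ γ₁ : X, E γ₀ ≠ ⊤ → E γ₁ ≠ ⊤ →
      ∃ γ : ℝ → X, ContinuousOn γ (Set.Icc 0 1) ∧ γ 0 = γ₀ ∧ γ 1 = γ₁ ∧
        ∀ s ∈ Set.Icc (0 : ℝ) 1,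
          bdf2Psi E τ u v (γ s)
            ≤ ((1 - s : ℝ) : EReal) * bdf2Psi E τ u v γ₀
              + ((s : ℝ) : EReal) * bdf2Psi E τ u v γ₁
              - ((1 / 2 * (3 / (2 * τ) + lam) * s * (1 - s) * dist γ₀ γ₁ ^ 2 : ℝ) : EReal))
    (τ : ℝ) (hτ : τ ∈ Set.Ioo 0 τs) (u v : X) (hu : E u ≠ ⊤) (hv : E v ≠ ⊤)
    (ws : X) (hws : E ws ≠ ⊤)
    (hmin : ∀ w : X, bdf2Psi E τ u v ws ≤ bdf2Psi E τ u v w)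
    (w : X) (hw : E w ≠ ⊤) :
    (((3 / (4 * τ) + lam / 2) * dist ws w ^ 2 - (1 / τ) * dist v w ^ 2
        + (1 / (4 * τ)) * dist u w ^ 2 : ℝ) : EReal)
      ≤ E w - E ws
        + ((-(1 / τ) * dist v ws ^ 2 + (1 / (4 * τ)) * dist u ws ^ 2 : ℝ) : EReal) := by
  obtain ⟨γ, -, rfl, rfl, hγ⟩ := hE3 τ hτ u v ws w hws hw
  exact bdf2_discrete_EVI_general hbot hτ.1.ne' hws hmin ⟨γ, rfl, rfl, hγ⟩
end

section
/- Let λ ≤ 0, let 0 < η ≤ τ with (−λ)·τ ≤ 1/2, and suppose τ = R·η for some natural number R ≥ 1. Define g_t := 1/(2 + √(1 − 2λt)) and h_t := 2 − √(1 − 2λt) for t > 0. Then 1 − h_τ·(h_η)^R·g_τ > 0 and the elementary inequality 1/(2·h_η) − g_τ/(1 − h_τ·(h_η)^R·g_τ) ≤ −3·λ·τ holds. -/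
/-!
Put `s = √(1 - 2λτ)` and `P = h_η ^ p`, where `τ = p η`. The denominator factors as
`1 - h_τ P g_τ = g_τ (2 (1 - P) + s (1 + P))`, so the subtracted fraction is the reciprocal of
`2 (1 - P) + s (1 + P)`. Both `h_η` and `s` are controlled by `√(1 - 2λt) ≤ 1 - λt`, and Bernoulli's
inequality turns `1 + λη ≤ h_η` into `1 + λτ ≤ P`. Hence that reciprocal is at least
`1 / (2 - 3λτ) ≥ 1 / 2 + (3 / 4) λτ`, while `1 / (2 h_η) ≤ 1 / 2 - λη` as long as `-λη ≤ 1 / 2`.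
-/

/-- The factor `g_t = 1 / (2 + √(1 - 2λt))` of the comparison estimate for the variational BDF2
scheme. -/
noncomputable def bdf2G (lam t : ℝ) : ℝ :=
  1 / (2 + √(1 - 2 * lam * t))

/-- The factor `h_t = 2 - √(1 - 2λt)` of the comparison estimate for the variational BDF2
scheme. -/
noncomputable def bdf2H (lam t : ℝ) : ℝ :=
  2 - √(1 - 2 * lam * t)

section Factors

variable {lam t p P : ℝ}

lemma one_le_sqrt_one_sub_two_mul (ht : lam * t ≤ 0) : 1 ≤ √(1 - 2 * lam * t) :=
  Real.one_le_sqrt.2 (by linarith)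

lemma sqrt_one_sub_two_mul_le (ht : lam * t ≤ 1) : √(1 - 2 * lam * t) ≤ 1 - lam * t :=
  Real.sqrt_le_iff.2 ⟨by linarith, by linarith [sq_nonneg (lam * t)]⟩

lemma bdf2G_pos (lam t : ℝ) : 0 < bdf2G lam t := by
  unfold bdf2G
  positivity

lemma bdf2H_le_one (ht : lam * t ≤ 0) : bdf2H lam t ≤ 1 := by
  unfold bdf2H
  linarith [one_le_sqrt_one_sub_two_mul ht]

lemma one_add_mul_le_bdf2H (ht : lam * t ≤ 1) : 1 + lam * t ≤ bdf2H lam t := by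
  unfold bdf2H
  linarith [sqrt_one_sub_two_mul_le ht]

lemma one_add_mul_le_bdf2H_rpow (ht₀ : -1 ≤ lam * t) (ht : lam * t ≤ 1) (hp : 1 ≤ p) :
    1 + p * (lam * t) ≤ bdf2H lam t ^ p :=
  calc 1 + p * (lam * t) ≤ (1 + lam * t) ^ p := one_add_mul_self_le_rpow_one_add ht₀ hp
    _ ≤ bdf2H lam t ^ p :=
      Real.rpow_le_rpow (by linarith) (one_add_mul_le_bdf2H ht) (by linarith)

lemma one_div_two_mul_bdf2H_le (ht₀ : -(1 / 2) ≤ lam * t) (ht : lam * t ≤ 0) :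
    1 / (2 * bdf2H lam t) ≤ 1 / 2 - lam * t :=
  calc 1 / (2 * bdf2H lam t) ≤ 1 / (2 * (1 + lam * t)) :=
        one_div_le_one_div_of_le (by linarith)
          (by linarith [one_add_mul_le_bdf2H (lam := lam) (t := t) (by linarith)])
    _ ≤ 1 / 2 - lam * t := by
        rw [div_le_iff₀ (by linarith)]
        nlinarith

lemma one_sub_bdf2H_mul_mul_bdf2G (lam t P : ℝ) :
    1 - bdf2H lam t * P * bdf2G lam t =
      bdf2G lam t * (2 * (1 - P) + √(1 - 2 * lam * t) * (1 + P)) := by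
  unfold bdf2G bdf2H
  field_simp
  ring

lemma two_mul_one_sub_add_sqrt_mul_pos (ht : lam * t ≤ 0) (hP₀ : -1 ≤ P) (hP₁ : P ≤ 1) :
    0 < 2 * (1 - P) + √(1 - 2 * lam * t) * (1 + P) := by
  have : 1 * (1 + P) ≤ √(1 - 2 * lam * t) * (1 + P) :=
    mul_le_mul_of_nonneg_right (one_le_sqrt_one_sub_two_mul ht) (by linarith)
  linarith

lemma two_mul_one_sub_add_sqrt_mul_le (ht : lam * t ≤ 0) (hP₀ : -1 ≤ P) (hP₁ : P ≤ 1)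
    (hP : 1 + lam * t ≤ P) :
    2 * (1 - P) + √(1 - 2 * lam * t) * (1 + P) ≤ 2 - 3 * (lam * t) :=
  calc 2 * (1 - P) + √(1 - 2 * lam * t) * (1 + P)
      ≤ 2 * (1 - P) + (1 - lam * t) * (1 + P) := by
        gcongr
        · linarith
        · exact sqrt_one_sub_two_mul_le (by linarith)
    _ ≤ 2 - 3 * (lam * t) := by nlinarith

lemma one_sub_bdf2H_mul_mul_bdf2G_pos (ht : lam * t ≤ 0) (hP₀ : -1 ≤ P) (hP₁ : P ≤ 1) :
    0 < 1 - bdf2H lam t * P * bdf2G lam t := by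
  rw [one_sub_bdf2H_mul_mul_bdf2G]
  exact mul_pos (bdf2G_pos lam t) (two_mul_one_sub_add_sqrt_mul_pos ht hP₀ hP₁)

lemma le_bdf2G_div_one_sub (ht : lam * t ≤ 0) (hP₀ : -1 ≤ P) (hP₁ : P ≤ 1)
    (hP : 1 + lam * t ≤ P) :
    1 / 2 + 3 / 4 * (lam * t) ≤ bdf2G lam t / (1 - bdf2H lam t * P * bdf2G lam t) := by
  rw [one_sub_bdf2H_mul_mul_bdf2G, div_mul_cancel_left₀ (bdf2G_pos lam t).ne']
  calc 1 / 2 + 3 / 4 * (lam * t) ≤ (2 - 3 * (lam * t))⁻¹ := by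
        rw [← one_div, le_div_iff₀ (by linarith)]
        nlinarith [sq_nonneg (lam * t)]
    _ ≤ (2 * (1 - P) + √(1 - 2 * lam * t) * (1 + P))⁻¹ :=
        inv_anti₀ (two_mul_one_sub_add_sqrt_mul_pos ht hP₀ hP₁)
          (two_mul_one_sub_add_sqrt_mul_le ht hP₀ hP₁ hP)

end Factors

theorem bdf2_comparison_elementary_inequality_general {lam τ η p : ℝ} (hlam : lam ≤ 0)
    (hη : 0 ≤ η) (hlamη : -lam * η ≤ 1 / 2) (hp : 1 ≤ p) (hτη : τ = p * η) :
    0 < 1 - bdf2H lam τ * bdf2H lam η ^ p * bdf2G lam τ ∧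
      1 / (2 * bdf2H lam η) - bdf2G lam τ / (1 - bdf2H lam τ * bdf2H lam η ^ p * bdf2G lam τ) ≤
        -lam * (η + 3 / 4 * τ) := by
  have hη_nonpos : lam * η ≤ 0 := mul_nonpos_of_nonpos_of_nonneg hlam hη
  have hτ_nonpos : lam * τ ≤ 0 :=
    mul_nonpos_of_nonpos_of_nonneg hlam (hτη ▸ mul_nonneg (by linarith) hη)
  have hH_nonneg : 0 ≤ bdf2H lam η := by
    linarith [one_add_mul_le_bdf2H (lam := lam) (t := η) (by linarith)]
  have hP_nonneg : 0 ≤ bdf2H lam η ^ p := Real.rpow_nonneg hH_nonneg p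
  have hP_le_one : bdf2H lam η ^ p ≤ 1 :=
    Real.rpow_le_one hH_nonneg (bdf2H_le_one hη_nonpos) (by linarith)
  have hP_bernoulli : 1 + lam * τ ≤ bdf2H lam η ^ p := by
    rw [hτη, mul_left_comm]
    exact one_add_mul_le_bdf2H_rpow (by linarith) (by linarith) hp
  refine ⟨one_sub_bdf2H_mul_mul_bdf2G_pos hτ_nonpos (by linarith) hP_le_one, ?_⟩
  have hupper := one_div_two_mul_bdf2H_le (by linarith) hη_nonpos
  have hlower := le_bdf2G_div_one_sub hτ_nonpos (by linarith) hP_le_one hP_bernoulli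
  linarith

/-- the elementary inequality
`1/(2h_η) − g_τ/(1 − h_τ·h_η^R·g_τ) ≤ −3λτ` (together with positivity of the denominator)
for `g_t = 1/(2 + √(1 − 2λt))`, `h_t = 2 − √(1 − 2λt)`, `λ ≤ 0`, `0 < η ≤ τ`,
`(−λ)τ ≤ 1/2` and `τ = R·η`, `R ≥ 1`. -/
theorem bdf2_comparison_elementary_inequality (lam τ η : ℝ) (hlam : lam ≤ 0)
    (hη : 0 < η) (hητ : η ≤ τ) (hlamτ : (-lam) * τ ≤ 1 / 2)
    (R : ℕ) (hR : 1 ≤ R) (hτη : τ = (R : ℝ) * η)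
    (g : ℝ → ℝ) (h : ℝ → ℝ)
    (hg : ∀ t : ℝ, g t = 1 / (2 + Real.sqrt (1 - 2 * lam * t)))
    (hh : ∀ t : ℝ, h t = 2 - Real.sqrt (1 - 2 * lam * t)) :
    0 < 1 - h τ * (h η) ^ R * g τ
    ∧ 1 / (2 * h η) - g τ / (1 - h τ * (h η) ^ R * g τ) ≤ -3 * lam * τ := by
  obtain rfl : g = bdf2G lam := funext hg
  obtain rfl : h = bdf2H lam := funext hh
  have hlamητ : lam * τ ≤ lam * η := mul_le_mul_of_nonpos_left hητ hlam
  have hlamτ_nonpos : lam * τ ≤ 0 := mul_nonpos_of_nonpos_of_nonneg hlam (hη.le.trans hητ)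
  obtain ⟨hpos, hle⟩ := bdf2_comparison_elementary_inequality_general hlam hη.le
    (by linarith) (Nat.one_le_cast.2 hR) hτη
  rw [Real.rpow_natCast] at hpos hle
  exact ⟨hpos, hle.trans (by linarith)⟩
end
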